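/- Let C be any conjugacy class of the complex reflection group W_n of type G(r,1,n) and let w ∈ C. Then there exists an element w′ ∈ C_min (the set of minimal length elements of C) such that w → w′. -/

import Mathlib

/-! ## The complex reflection group `W_n` of type `G(r,1,n)`.

Generators are indexed by natural numbers: index `0` is `t` and index `i`
(for `1 ≤ i ≤ n-1`) is `s_i`; generators with index `≥ n` are killed by a relator,
so this is a presentation of the complex reflection group of type `G(r,1,n)`. -/

noncomputable section

namespace CRG

/-- The relators of the presentation of `G(r,1,n)`. -/
def rels (r n : ℕ) : Set (FreeGroup ℕ) :=
  {w | (w = FreeGroup.of 0 ^ r)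
    ∨ (∃ i, 1 ≤ i ∧ i < n ∧ w = FreeGroup.of i ^ 2)
    ∨ (2 ≤ n ∧ w = FreeGroup.of 0 * FreeGroup.of 1 * FreeGroup.of 0 * FreeGroup.of 1 *
        (FreeGroup.of 1 * FreeGroup.of 0 * FreeGroup.of 1 * FreeGroup.of 0)⁻¹)
    ∨ (∃ i, 2 ≤ i ∧ i < n ∧ w = FreeGroup.of 0 * FreeGroup.of i *
        (FreeGroup.of i * FreeGroup.of 0)⁻¹)
    ∨ (∃ i, 1 ≤ i ∧ i + 1 < n ∧ w = FreeGroup.of i * FreeGroup.of (i + 1) * FreeGroup.of i *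
        (FreeGroup.of (i + 1) * FreeGroup.of i * FreeGroup.of (i + 1))⁻¹)
    ∨ (∃ i j, 1 ≤ i ∧ i + 1 < j ∧ j < n ∧ w = FreeGroup.of i * FreeGroup.of j *
        (FreeGroup.of j * FreeGroup.of i)⁻¹)
    ∨ (∃ i, n ≤ i ∧ w = FreeGroup.of i)}

/-- The complex reflection group of type `G(r,1,n)`. -/
abbrev W (r n : ℕ) : Type := PresentedGroup (rels r n)

/-- The generator with index `m` : `t` for `m = 0`, `s_m` for `1 ≤ m ≤ n-1`. -/
def gen (r n : ℕ) (m : ℕ) : W r n := PresentedGroup.of m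

/-- The product in `W r n` of a word, given as a list of generator indices. -/
def wprod (r n : ℕ) (l : List ℕ) : W r n := (l.map (gen r n)).prod

/-- The set of standard generators `S = {t, s_1, …, s_{n-1}}`. -/
def S (r n : ℕ) : Set (W r n) := {x | ∃ m, m < n ∧ x = gen r n m}

/-- The length of `w` : the minimal length of a word in `t, s_1, …, s_{n-1}`
expressing `w`. -/
def ell (r n : ℕ) (w : W r n) : ℕ :=
  sInf {k | ∃ l : List ℕ, (∀ m ∈ l, m < n) ∧ l.length = k ∧ wprod r n l = w}

/-- `l` is a reduced expression of `w`. -/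
def IsReducedWord (r n : ℕ) (l : List ℕ) (w : W r n) : Prop :=
  (∀ m ∈ l, m < n) ∧ wprod r n l = w ∧ l.length = ell r n w

/-- `w →ˢ w'` : `w' = s w s⁻¹` for `s ∈ S`, with `ℓ(w') ≤ ℓ(w)` and either
`ℓ(sw) < ℓ(w)` or `ℓ(w s⁻¹) < ℓ(w)`. -/
def Step (r n : ℕ) (s w w' : W r n) : Prop :=
  s ∈ S r n ∧ w' = s * w * s⁻¹ ∧ ell r n w' ≤ ell r n w ∧
    (ell r n (s * w) < ell r n w ∨ ell r n (w * s⁻¹) < ell r n w)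

/-- `w → w'` : a finite (possibly empty) chain of steps `→ˢ` with `s ∈ S`. -/
def Arrow (r n : ℕ) : W r n → W r n → Prop :=
  Relation.ReflTransGen (fun w w' => ∃ s, Step r n s w w')

end CRG

/-!
If `ℓ(x s) = ℓ(x) + 1`, then `x s →ˢ s x`. So an element that reaches nothing shorter along `→`
reaches every rotation of each of its reduced words. Let `v` be of minimal length among the elements
that `w` reaches.

* Writing elements in terms of the double cosets of `W_j` in `W_{j+1}`, with control of the
  lengths, and rotating, one sees that `v` reaches a product of blocks
  `s_m ⋯ s_1 t^c s_1 ⋯ s_m · s_{m+1} ⋯ s_{m+λ-1}` of the length of `v`, one for each cycle; here `λ`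
  is the length of the cycle and `c` its colour, and the first factor is missing if `c = 0`.
* If a coloured block (`c ≠ 0`) stands directly after a longer coloured block or after a block of
  colour `0`, then rotations lead to a word in which two letters cancel, against the choice of `v`.
  Hence the product of blocks is sorted: the coloured blocks by increasing length, then the others.
* The multiset of pairs `(λ, c)` is a conjugacy invariant, read off from the action of the group by
  coloured permutations, and the length of the word of a sorted product of blocks depends only on
  this multiset.

For minimality, let `w` reach the sorted product `w'` and let `u` be conjugate to `w`. Then `u`
reaches a sorted product `u'`, whose blocks are those of `w'` up to order, so
`ℓ(w') = ℓ(u') ≤ ℓ(u)`. No formula for the length function is needed.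
-/

namespace CRG

variable {r n : ℕ}

/-! ### Generators, words and lengths -/

lemma gen_eq_one {i : ℕ} (h : n ≤ i) : gen r n i = 1 :=
  PresentedGroup.one_of_mem (by simp only [rels]; right; right; right; right; right; right
                                exact ⟨i, h, rfl⟩)

lemma gen_zero_pow : gen r n 0 ^ r = 1 :=
  PresentedGroup.one_of_mem (by left; rfl)

lemma gen_mul_self {i : ℕ} (h : 1 ≤ i) : gen r n i * gen r n i = 1 := by
  by_cases hi : i < n
  · rw [← pow_two]
    exact PresentedGroup.one_of_mem (by right; left; exact ⟨i, h, hi, rfl⟩)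
  · rw [gen_eq_one (not_lt.mp hi), one_mul]

lemma inv_gen {i : ℕ} (h : 1 ≤ i) : (gen r n i)⁻¹ = gen r n i :=
  inv_eq_of_mul_eq_one_left (gen_mul_self h)

lemma commute_gen_zero_conj :
    Commute (gen r n 0) (gen r n 1 * gen r n 0 * (gen r n 1)⁻¹) := by
  by_cases hn : 2 ≤ n
  · have h := PresentedGroup.mk_eq_mk_of_mul_inv_mem (rels := rels r n)
      (by right; right; left; exact ⟨hn, rfl⟩)
    rw [inv_gen le_rfl, commute_iff_eq]
    simpa only [map_mul, mul_assoc] using! h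
  · rw [gen_eq_one (i := 1) (by omega), inv_one, one_mul, mul_one]

lemma gen_braid {i : ℕ} (h : 1 ≤ i) (h' : i + 1 < n) :
    gen r n i * gen r n (i + 1) * gen r n i = gen r n (i + 1) * gen r n i * gen r n (i + 1) :=
  PresentedGroup.mk_eq_mk_of_mul_inv_mem
    (by right; right; right; right; left; exact ⟨i, h, h', rfl⟩)

lemma gen_commute {i j : ℕ} (h : i + 1 < j ∨ j + 1 < i) : Commute (gen r n i) (gen r n j) := by
  wlog hij : i + 1 < j generalizing i j
  · exact (this h.symm (by omega)).symm
  by_cases hj : j < n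
  · rcases Nat.eq_zero_or_pos i with rfl | hi
    · exact PresentedGroup.mk_eq_mk_of_mul_inv_mem
        (by right; right; right; left; exact ⟨j, hij, hj, rfl⟩)
    · exact PresentedGroup.mk_eq_mk_of_mul_inv_mem
        (by right; right; right; right; right; left; exact ⟨i, j, hi, hij, hj, rfl⟩)
  · rw [gen_eq_one (not_lt.mp hj)]
    exact Commute.one_right _

/-- `w` is a product of at most `k` generators of index less than `j`. The index may exceed the
rank `n`, where the generators are trivial. -/
inductive HasWord (j : ℕ) : ℕ → W r n → Prop
  | one (k : ℕ) : HasWord j k 1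
  | mul_gen {k : ℕ} {w : W r n} (hw : HasWord j k w) {i : ℕ} (hi : i < j) :
      HasWord j (k + 1) (w * gen r n i)

namespace HasWord

variable {j k l : ℕ} {w v : W r n}

lemma gen {i : ℕ} (hi : i < j) : HasWord j 1 (gen r n i) := by
  simpa only [one_mul] using (one 0).mul_gen hi

lemma mono (h : HasWord j k w) {j' k' : ℕ} (hj : j ≤ j') (hk : k ≤ k') : HasWord j' k' w := by
  induction h generalizing k' with
  | one => exact one k'
  | mul_gen _ hi ih =>
    obtain ⟨k', rfl⟩ := Nat.exists_eq_add_of_lt hk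
    exact (ih (by omega)).mul_gen (hi.trans_le hj)

lemma mul (hw : HasWord j k w) (hv : HasWord j l v) : HasWord j (k + l) (w * v) := by
  induction hv with
  | one l => simpa only [mul_one] using hw.mono le_rfl (Nat.le_add_right k l)
  | mul_gen _ hi ih => simpa only [mul_assoc] using! ih.mul_gen hi

lemma pow {i : ℕ} (hi : i < j) (k : ℕ) : HasWord j k (CRG.gen r n i ^ k) := by
  induction k with
  | zero => exact one 0
  | succ k ih => simpa only [pow_succ] using ih.mul_gen hi

lemma commute (h : HasWord j k w) {g : W r n} (hg : ∀ i < j, Commute (CRG.gen r n i) g) :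
    Commute w g := by
  induction h with
  | one => exact Commute.one_left g
  | mul_gen _ hi ih => exact ih.mul_left (hg _ hi)

lemma eq_one (h : HasWord 0 k w) : w = 1 := by
  cases h with
  | one => rfl
  | mul_gen _ hi => exact absurd hi (Nat.not_lt_zero _)

lemma exists_list (h : HasWord j k w) :
    ∃ x : List ℕ, (∀ i ∈ x, i < n) ∧ x.length ≤ k ∧ wprod r n x = w := by
  induction h with
  | one k => exact ⟨[], by simp, Nat.zero_le k, rfl⟩
  | @mul_gen k w _ i _ ih =>
    obtain ⟨x, hx, hxk, rfl⟩ := ih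
    by_cases hi : i < n
    · exact ⟨x ++ [i], List.forall_mem_append.mpr ⟨hx, List.forall_mem_singleton.mpr hi⟩,
        by simpa using hxk, by simp [wprod]⟩
    · exact ⟨x, hx, hxk.trans k.le_succ, by rw [gen_eq_one (not_lt.mp hi), mul_one]⟩

lemma ell_le (h : HasWord j k w) : ell r n w ≤ k := by
  obtain ⟨x, hx, hxk, hw⟩ := h.exists_list
  have hwx : ell r n w ≤ x.length := Nat.sInf_le ⟨x, hx, rfl, hw⟩
  exact hwx.trans hxk

end HasWord

lemma hasWord_wprod {j : ℕ} {x : List ℕ} (hx : ∀ i ∈ x, i < j) :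
    HasWord j x.length (wprod r n x) := by
  induction x using List.reverseRecOn with
  | nil => exact .one 0
  | append_singleton x i ih =>
    simpa [wprod] using (ih fun i hi => hx i (by simp [hi])).mul_gen (hx i (by simp))

lemma isOfFinOrder_gen [NeZero r] (i : ℕ) : IsOfFinOrder (gen r n i) := by
  rw [isOfFinOrder_iff_pow_eq_one]
  rcases Nat.eq_zero_or_pos i with rfl | hi
  · exact ⟨r, NeZero.pos r, gen_zero_pow⟩
  · exact ⟨2, Nat.two_pos, by rw [pow_two, gen_mul_self hi]⟩

lemma exists_hasWord [NeZero r] (w : W r n) : ∃ k, HasWord n k w := by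
  have hclosure : Submonoid.closure (Set.range (gen r n)) = ⊤ := by
    rw [← Subgroup.closure_toSubmonoid_of_isOfFinOrder
      (Set.forall_mem_range.mpr isOfFinOrder_gen)]
    exact congrArg Subgroup.toSubmonoid (PresentedGroup.closure_range_of (rels r n))
  have hw : w ∈ Submonoid.closure (Set.range (gen r n)) := hclosure ▸ Submonoid.mem_top w
  induction hw using Submonoid.closure_induction with
  | mem _ h =>
    obtain ⟨i, rfl⟩ := h
    by_cases hi : i < n
    · exact ⟨1, .gen hi⟩
    · exact ⟨0, gen_eq_one (r := r) (not_lt.mp hi) ▸ .one 0⟩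
  | one => exact ⟨0, .one 0⟩
  | mul _ _ _ _ hx hy =>
    obtain ⟨k, hx⟩ := hx
    obtain ⟨l, hy⟩ := hy
    exact ⟨k + l, hx.mul hy⟩

lemma hasWord_ell [NeZero r] (w : W r n) : HasWord n (ell r n w) w := by
  obtain ⟨k, hk⟩ := exists_hasWord w
  obtain ⟨x, hx, -, hxw⟩ := hk.exists_list
  obtain ⟨y, hy, hy_length, rfl⟩ := Nat.sInf_mem
    (s := {k | ∃ y : List ℕ, (∀ i ∈ y, i < n) ∧ y.length = k ∧ wprod r n y = w})
    ⟨x.length, x, hx, rfl, hxw⟩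
  exact (hasWord_wprod hy).mono le_rfl hy_length.le

lemma ell_mul_le [NeZero r] (w v : W r n) : ell r n (w * v) ≤ ell r n w + ell r n v :=
  ((hasWord_ell w).mul (hasWord_ell v)).ell_le

lemma ell_mul_le_of_le [NeZero r] {w v : W r n} {k l : ℕ} (hw : ell r n w ≤ k)
    (hv : ell r n v ≤ l) : ell r n (w * v) ≤ k + l :=
  (ell_mul_le w v).trans (Nat.add_le_add hw hv)

lemma ell_gen_mul_le [NeZero r] {i : ℕ} (hi : i < n) (w : W r n) :
    ell r n (gen r n i * w) ≤ ell r n w + 1 := by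
  rw [add_comm]
  exact ((HasWord.gen hi).mul (hasWord_ell w)).ell_le

/-! ### Rotations of products that cannot be shortened -/

lemma Arrow.ell_le {w v : W r n} (h : Arrow r n w v) : ell r n v ≤ ell r n w := by
  induction h with
  | refl => exact le_rfl
  | tail _ h ih =>
    obtain ⟨_, -, -, hle, -⟩ := h
    exact hle.trans ih

lemma Arrow.isConj {w v : W r n} (h : Arrow r n w v) : IsConj w v := by
  induction h with
  | refl => exact IsConj.refl w
  | tail _ h ih =>
    obtain ⟨s, -, rfl, -, -⟩ := h
    exact ih.trans (isConj_iff.mpr ⟨s, rfl⟩)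

/-- No element that can be reached from `w` along `→` is shorter than `k`. -/
def Stable (k : ℕ) (w : W r n) : Prop := ∀ v, Arrow r n w v → k ≤ ell r n v

namespace Stable

variable {k : ℕ} {w v x y z : W r n}

lemma le_ell (h : Stable k w) : k ≤ ell r n w := h w .refl

lemma of_arrow (h : Stable k w) (hwv : Arrow r n w v) : Stable k v :=
  fun u hu => h u (hwv.trans hu)

variable [NeZero r]

/-- If `ℓ(x s) = ℓ(x) + 1`, then `x s →ˢ s x`; stability excludes every other case. -/
lemma arrow_rotate_gen {i : ℕ} (h : Stable k (x * gen r n i)) (hi : i < n)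
    (hk : ell r n x + 1 ≤ k) : Arrow r n (x * gen r n i) (gen r n i * x) := by
  have hlt : ell r n x < ell r n (x * gen r n i) := by have := h.le_ell; omega
  have hle : ell r n (gen r n i * x) ≤ ell r n (x * gen r n i) :=
    (ell_gen_mul_le hi x).trans hlt
  refine .single ⟨gen r n i, ⟨i, hi, rfl⟩, by group, hle, .inr ?_⟩
  rwa [mul_inv_cancel_right]

lemma arrow_rotate_of_hasWord {l : ℕ} (hy : HasWord n l y) (h : Stable k (x * y))
    (hk : ell r n x + l ≤ k) : Arrow r n (x * y) (y * x) := by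
  induction hy generalizing x with
  | one => rw [mul_one, one_mul]; exact .refl
  | @mul_gen l y hy i hi ih =>
    rw [← mul_assoc] at h ⊢
    have hxy : ell r n (x * y) ≤ ell r n x + l :=
      ell_mul_le_of_le le_rfl hy.ell_le
    have hrot := h.arrow_rotate_gen hi (by omega)
    rw [← mul_assoc] at hrot
    have hsx := ell_gen_mul_le hi x
    refine hrot.trans ?_
    rw [mul_assoc y]
    exact ih (h.of_arrow hrot) (by omega)

lemma arrow_rotate (h : Stable k (x * y)) (hk : ell r n x + ell r n y ≤ k) :
    Arrow r n (x * y) (y * x) :=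
  arrow_rotate_of_hasWord (hasWord_ell y) h hk

lemma arrow_slide (h : Stable k (x * y * z)) (hxz : Commute x z)
    (hk : ell r n x + ell r n y + ell r n z ≤ k) : Arrow r n (x * y * z) (y * x * z) := by
  have hyz := ell_mul_le y z
  rw [mul_assoc] at h ⊢
  simpa only [mul_assoc, hxz.eq] using h.arrow_rotate (by omega)

end Stable

/-! ### Runs and twists -/

/-- The product `s_a s_{a+1} ⋯ s_{a+k-1}`. -/
def run (a k : ℕ) : W r n := wprod r n (List.range' a k)

section Run

variable {a b k : ℕ}

@[simp] lemma run_zero (a : ℕ) : run a 0 = (1 : W r n) := rfl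

lemma run_succ (a k : ℕ) : run a (k + 1) = run a k * gen r n (a + k) := by
  simp [run, wprod, List.range'_concat]

lemma run_succ' (a k : ℕ) : run a (k + 1) = gen r n a * run (a + 1) k := by
  simp [run, wprod, List.range'_succ]

lemma run_add (a k l : ℕ) : run a (k + l) = (run a k * run (a + k) l : W r n) := by
  simp only [run, wprod, ← List.range'_append_1, List.map_append, List.prod_append]

lemma hasWord_run (a k : ℕ) : HasWord (a + k) k (run a k : W r n) := by
  have h := hasWord_wprod (r := r) (n := n) (j := a + k) (x := List.range' a k)
    (by simp [List.mem_range'_1])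
  rwa [List.length_range'] at h

lemma hasWord_inv_run (ha : 1 ≤ a) (k : ℕ) : HasWord (a + k) k (run a k : W r n)⁻¹ := by
  induction k with
  | zero => simpa only [run_zero, inv_one] using .one 0
  | succ k ih =>
    rw [run_succ, mul_inv_rev, inv_gen (by omega), add_comm k 1]
    exact (HasWord.gen (by omega)).mul (ih.mono (by omega) le_rfl)

lemma ell_run_le (a k : ℕ) : ell r n (run a k) ≤ k := (hasWord_run a k).ell_le

lemma ell_inv_run_le (ha : 1 ≤ a) (k : ℕ) : ell r n (run a k)⁻¹ ≤ k := (hasWord_inv_run ha k).ell_le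

lemma commute_run {g : W r n} (h : ∀ i, a ≤ i → i < a + k → Commute (gen r n i) g) :
    Commute (run a k) g := by
  induction k with
  | zero => exact Commute.one_left g
  | succ k ih =>
    rw [run_succ]
    exact (ih fun i hai hik => h i hai (by omega)).mul_left (h (a + k) (by omega) (by omega))

lemma semiconjBy_gen_mul_gen_succ {i : ℕ} (h : 1 ≤ i) (h' : i + 1 < n) :
    SemiconjBy (gen r n i * gen r n (i + 1)) (gen r n i) (gen r n (i + 1)) := by
  rw [SemiconjBy, gen_braid h h', mul_assoc]

lemma semiconjBy_gen_succ_mul_gen {i : ℕ} (h : 1 ≤ i) (h' : i + 1 < n) :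
    SemiconjBy (gen r n (i + 1) * gen r n i) (gen r n (i + 1)) (gen r n i) := by
  rw [SemiconjBy, ← gen_braid h h', mul_assoc]

/-- Conjugating by a run of consecutive generators raises the index of each of them but the last,
by the braid relation. -/
lemma semiconjBy_run_gen {q i : ℕ} (ha : 1 ≤ a) (hai : a ≤ i) (hiq : i + 1 < a + q)
    (hq : a + q ≤ n) : SemiconjBy (run a q) (gen r n i) (gen r n (i + 1)) := by
  induction q with
  | zero => omega
  | succ q ih =>
    rw [run_succ]
    rcases Nat.lt_or_ge (i + 1) (a + q) with h | h
    · exact (ih h (by omega)).mul_left (gen_commute (by omega)).semiconjBy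
    obtain ⟨p, rfl⟩ : ∃ p, q = p + 1 := ⟨q - 1, by omega⟩
    obtain rfl : i = a + p := by omega
    have hcomm : Commute (run a p) (gen r n (a + (p + 1))) :=
      commute_run fun i _ _ => gen_commute (by omega)
    rw [run_succ, mul_assoc]
    exact hcomm.semiconjBy.mul_left (semiconjBy_gen_mul_gen_succ (by omega) (by omega))

lemma semiconjBy_run {q : ℕ} (ha : 1 ≤ a) (hab : a ≤ b) (hk : b + k < a + q) (hq : a + q ≤ n) :
    SemiconjBy (run a q : W r n) (run b k) (run (b + 1) k) := by
  induction k with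
  | zero => exact SemiconjBy.one_right _
  | succ k ih =>
    rw [run_succ, run_succ, Nat.add_right_comm b 1 k]
    exact (ih (by omega)).mul_right (semiconjBy_run_gen ha (by omega) (by omega) hq)

lemma run_mul_inv_run_succ (ha : 1 ≤ a) (hn : a + k < n) :
    run a k * (run a (k + 1))⁻¹ = ((run (a + 1) k)⁻¹ * gen r n a * run (a + 1) k : W r n) := by
  rw [← (semiconjBy_run ha le_rfl (Nat.lt_succ_self _) hn).inv_symm_left.eq, run_succ',
    mul_inv_rev, inv_gen ha]

lemma run_mul_run_mul_inv_run {d e q : ℕ} (ha : 1 ≤ a) (hq : d + e + 3 < q) (hn : a + q ≤ n) :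
    run (a + 1) (d + 2 + e) * run a q * (run (a + 1 + d) (e + 2))⁻¹ =
      ((run (a + 1 + d + 2) (e + 1))⁻¹ * (run (a + 1) (d + 3 + e) * run a q) : W r n) := by
  have hlong : SemiconjBy (run a q : W r n) (run (a + 1 + d) (e + 2))⁻¹
      (run (a + 1 + d + 1) (e + 2))⁻¹ :=
    (semiconjBy_run ha (by omega) (by omega) hn).inv_right
  have hshort : SemiconjBy (run (a + 1) (d + 3 + e) : W r n) (run (a + 1 + d + 1) (e + 1))⁻¹
      (run (a + 1 + d + 2) (e + 1))⁻¹ :=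
    (semiconjBy_run (by omega) (by omega) (by omega) (by omega)).inv_right
  have hgen : run (a + 1) (d + 2 + e) * (run (a + 1 + d + 1) (e + 2))⁻¹ =
      (run (a + 1) (d + 3 + e) * (run (a + 1 + d + 1) (e + 1))⁻¹ : W r n) := by
    rw [show d + 3 + e = d + 2 + e + 1 by omega, run_succ (a + 1), run_succ _ (e + 1), mul_inv_rev,
      inv_gen (by omega), show a + 1 + d + 1 + (e + 1) = a + 1 + (d + 2 + e) by omega, mul_assoc]
  rw [mul_assoc, hlong.eq, ← mul_assoc, hgen, hshort.eq, mul_assoc]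

end Run

/-- The element `s_m ⋯ s_1 t^c s_1 ⋯ s_m`, which multiplies the coordinate `m` by the `c`-th power
of a primitive `r`-th root of unity. -/
def twist : ℕ → ZMod r → W r n
  | 0, c => gen r n 0 ^ c.val
  | m + 1, c => gen r n (m + 1) * twist m c * gen r n (m + 1)

/-- The number of letters in the word for `twist m c`, which is empty for `c = 0`. -/
def twistLength (m : ℕ) (c : ZMod r) : ℕ := if c = 0 then 0 else 2 * m + c.val

section Twist

variable {m k : ℕ} {c : ZMod r}

@[simp] lemma twist_zero (m : ℕ) : twist m (0 : ZMod r) = (1 : W r n) := by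
  induction m with
  | zero => simp [twist]
  | succ m ih => rw [twist, ih, mul_one, gen_mul_self (by omega)]

@[simp] lemma twistLength_zero (m : ℕ) : twistLength m (0 : ZMod r) = 0 := if_pos rfl

lemma twistLength_of_ne_zero (hc : c ≠ 0) : twistLength m c = 2 * m + c.val := if_neg hc

lemma twistLength_le_succ (m : ℕ) (c : ZMod r) : twistLength m c ≤ twistLength (m + 1) c := by
  unfold twistLength
  split_ifs <;> omega

lemma twistLength_succ_le (m : ℕ) (c : ZMod r) : twistLength (m + 1) c ≤ twistLength m c + 2 := by
  unfold twistLength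
  split_ifs <;> omega

lemma hasWord_twist (m : ℕ) (c : ZMod r) :
    HasWord (m + 1) (twistLength m c) (twist m c : W r n) := by
  by_cases hc : c = 0
  · subst hc
    rw [twist_zero]
    exact .one _
  rw [twistLength_of_ne_zero hc]
  induction m with
  | zero => simpa only [mul_zero, zero_add] using! HasWord.pow (r := r) (n := n) Nat.one_pos c.val
  | succ m ih =>
    have h := ((HasWord.gen (r := r) (n := n) m.succ.lt_succ_self).mul
      (ih.mono (by omega) le_rfl)).mul_gen m.succ.lt_succ_self
    exact h.mono le_rfl (by omega)

lemma twist_add (m k : ℕ) (c : ZMod r) :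
    twist (m + k) c = ((run (m + 1) k)⁻¹ * twist m c * run (m + 1) k : W r n) := by
  induction k with
  | zero => simp
  | succ k ih =>
    rw [← add_assoc, twist, ih, run_succ, mul_inv_rev, inv_gen (by omega),
      Nat.add_right_comm m 1 k]
    simp only [mul_assoc]

lemma commute_gen_twist_of_lt {i : ℕ} (h : m + 1 < i) (c : ZMod r) :
    Commute (gen r n i) (twist m c) :=
  ((hasWord_twist m c).commute fun _ _ => gen_commute (by omega)).symm

lemma commute_gen_twist {i : ℕ} (hi : i < m) (hm : m < n) (c : ZMod r) :
    Commute (gen r n i) (twist m c) := by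
  induction m with
  | zero => omega
  | succ m ih =>
    rcases Nat.lt_succ_iff_lt_or_eq.mp hi with him | rfl
    · have hs : Commute (gen r n i) (gen r n (m + 1)) := gen_commute (by omega)
      exact (hs.mul_right (ih him (by omega))).mul_right hs
    obtain _ | i := i
    · have hconj : gen r n 1 * gen r n 0 ^ c.val * gen r n 1 =
          (gen r n 1 * gen r n 0 * (gen r n 1)⁻¹) ^ c.val := by
        rw [conj_pow, inv_gen le_rfl]
      rw [twist, twist, hconj]
      exact commute_gen_zero_conj.pow_right c.val
    -- With `a = s_{i+1}` and `b = s_{i+2}`, conjugation by `a b` turns `a` into `b`, which commutes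
    -- with the inner twist, and conjugation by `b a` turns it back.
    have htwist := (commute_gen_twist_of_lt (r := r) (n := n) (i + 1).lt_succ_self c).symm
    have h := ((semiconjBy_gen_succ_mul_gen (r := r) (by omega) hm).mul_left htwist).mul_left
      (semiconjBy_gen_mul_gen_succ (by omega) hm)
    rw [twist, twist]
    simpa only [mul_assoc] using! (show Commute _ _ from h).symm

end Twist

/-! ### Double coset decomposition -/

/-- With a word of length at most `p`, `x` lies in `W_j t_j^c` or in `W_j s_j W_j`, where `t_j^c` is
the twist of the coordinate `j`. These are the double cosets of `W_j` in `W_{j+1}`. -/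
def HasDecomposition (j p : ℕ) (x : W r n) : Prop :=
  (∃ x' p' c, HasWord j p' x' ∧ p' + twistLength j c ≤ p ∧ x = x' * twist j c) ∨
    (1 ≤ j ∧ ∃ x' y p' q, HasWord j p' x' ∧ HasWord j q y ∧ p' + 1 + q ≤ p ∧
      x = x' * gen r n j * y)

lemma hasDecomposition_of_hasWord_one [NeZero r] {p : ℕ} {x : W r n} (hx : HasWord 1 p x) :
    HasDecomposition 0 p x := by
  obtain ⟨k, hk, rfl⟩ : ∃ k ≤ p, x = gen r n 0 ^ k := by
    induction hx with
    | one p => exact ⟨0, p.zero_le, (pow_zero _).symm⟩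
    | mul_gen _ hi ih =>
      obtain ⟨k, hk, rfl⟩ := ih
      exact ⟨k + 1, by omega, by rw [pow_succ, Nat.lt_one_iff.mp hi]⟩
  refine .inl ⟨1, 0, (k : ZMod r), .one 0, ?_, ?_⟩
  · have hval : (k : ZMod r).val ≤ k := ZMod.val_natCast r k ▸ Nat.mod_le k r
    by_cases h : (k : ZMod r) = 0
    · simp [h]
    · rw [twistLength_of_ne_zero h]
      omega
  · rw [one_mul, twist, ZMod.val_natCast, ← pow_mod_orderOf, ← pow_mod_orderOf _ (k % r),
      Nat.mod_mod_of_dvd _ (orderOf_dvd_of_pow_eq_one gen_zero_pow)]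

/-- The double coset `W_{j+1} s_{j+1} W_{j+1}` absorbs a further factor `s_{j+1}`: the decomposition
of the factor between the two letters `s_{j+1}` either makes them part of a twist, or a braid
relation applies. -/
lemma HasDecomposition.mul_gen_of_between {j p q k : ℕ} (hj : j + 1 < n) {x y : W r n}
    (hx : HasWord (j + 1) p x) (hy : HasDecomposition j q y) (hk : p + 1 + q + 1 ≤ k) :
    HasDecomposition (j + 1) k (x * gen r n (j + 1) * y * gen r n (j + 1)) := by
  obtain ⟨y', q', c, hy', hq, rfl⟩ | ⟨h, y', y'', q', q'', hy', hy'', hq, rfl⟩ := hy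
  · have hs : Commute y' (gen r n (j + 1)) := hy'.commute fun i _ => gen_commute (by omega)
    have hc := twistLength_succ_le j c
    refine .inl ⟨x * y', p + q', c, hx.mul (hy'.mono (by omega) le_rfl), by omega, ?_⟩
    rw [twist]
    simp only [← mul_assoc]
    rw [mul_assoc x, ← hs.eq]
    simp only [mul_assoc]
  · have hs : Commute y' (gen r n (j + 1)) := hy'.commute fun i _ => gen_commute (by omega)
    have hs' : Commute y'' (gen r n (j + 1)) := hy''.commute fun i _ => gen_commute (by omega)
    have hmono {q : ℕ} {z : W r n} (hz : HasWord j q z) : HasWord (j + 1) q z :=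
      hz.mono (by omega) le_rfl
    have hgen : HasWord (j + 1) 1 (gen r n j) := .gen (by omega)
    refine .inr ⟨by omega, x * y' * gen r n j, gen r n j * y'', p + q' + 1, 1 + q'',
      (hx.mul (hmono hy')).mul hgen, hgen.mul (hmono hy''), by omega, ?_⟩
    calc x * gen r n (j + 1) * (y' * gen r n j * y'') * gen r n (j + 1)
        = x * (gen r n (j + 1) * y') * gen r n j * (y'' * gen r n (j + 1)) := by
          simp only [mul_assoc]
      _ = x * y' * (gen r n (j + 1) * gen r n j * gen r n (j + 1)) * y'' := by
          rw [← hs.eq, hs'.eq]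
          simp only [mul_assoc]
      _ = x * y' * gen r n j * gen r n (j + 1) * (gen r n j * y'') := by
          rw [← gen_braid h hj]
          simp only [mul_assoc]

lemma hasDecomposition [NeZero r] {j : ℕ} (hj : j < n) {p : ℕ} {x : W r n}
    (hx : HasWord (j + 1) p x) : HasDecomposition j p x := by
  induction j generalizing p x with
  | zero => exact hasDecomposition_of_hasWord_one hx
  | succ j ih_rank =>
    have h_pos : 1 ≤ j + 1 := Nat.le_add_left 1 j
    induction hx with
    | one p => exact .inl ⟨1, 0, 0, .one 0, by simp, by simp⟩
    | @mul_gen p x _ i hi ih =>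
      rcases Nat.lt_succ_iff_lt_or_eq.mp hi with hij | rfl
      · obtain ⟨x', p', c, hx', hp, rfl⟩ | ⟨h, x', y, p', q, hx', hy, hp, rfl⟩ := ih
        · refine .inl ⟨x' * gen r n i, p' + 1, c, hx'.mul_gen hij, by omega, ?_⟩
          rw [mul_assoc, mul_assoc, (commute_gen_twist hij hj c).eq]
        · exact .inr ⟨h, x', y * gen r n i, p', q + 1, hx', hy.mul_gen hij, by omega,
            mul_assoc _ _ _⟩
      · obtain ⟨x', p', c, hx', hp, rfl⟩ | ⟨-, x', y, p', q, hx', hy, hp, rfl⟩ := ih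
        · have hc := twistLength_le_succ j c
          refine .inr ⟨h_pos, x', twist j c, p', _, hx', hasWord_twist j c, by omega, ?_⟩
          rw [twist]
          simp only [mul_assoc, gen_mul_self h_pos, mul_one]
        · exact .mul_gen_of_between hj hx' (ih_rank (by omega) hy) (by omega)

/-! ### Products of blocks -/

/-- A cycle of a coloured permutation, with its colour: the total number of `t`'s picked up along
the cycle. The length is stored as `tail + 1` because it is positive. -/
structure Block (r : ℕ) where
  tail : ℕ
  colour : ZMod r
deriving DecidableEq

namespace Block

/-- The number of coordinates that the cycle moves. -/
def length (b : Block r) : ℕ := b.tail + 1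

/-- The cycle `b` on the coordinates `m, …, m + b.length - 1`. -/
def elt (b : Block r) (m : ℕ) : W r n := twist m b.colour * run (m + 1) b.tail

/-- The number of letters in the word for `b.elt m`. -/
def wordLength (b : Block r) (m : ℕ) : ℕ := twistLength m b.colour + b.tail

lemma hasWord_elt (b : Block r) (m : ℕ) :
    HasWord (m + b.length) (b.wordLength m) (b.elt m : W r n) :=
  ((hasWord_twist m b.colour).mono (by simp only [length]; omega) le_rfl).mul
    ((hasWord_run (m + 1) b.tail).mono (by simp only [length]; omega) le_rfl)

lemma commute_gen_elt (b : Block r) {i m : ℕ} (hi : i < m) (hm : m < n) :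
    Commute (gen r n i) (b.elt m) :=
  (commute_gen_twist hi hm _).mul_right (commute_run fun _ _ _ => gen_commute (by omega)).symm

end Block

/-- The product of the cycles in the list, the first of which starts at the coordinate `m`. -/
def blocks : ℕ → List (Block r) → W r n
  | _, [] => 1
  | m, b :: l => b.elt m * blocks (m + b.length) l

/-- The number of letters in the word for `blocks m l`. -/
def blocksLength : ℕ → List (Block r) → ℕ
  | _, [] => 0
  | m, b :: l => b.wordLength m + blocksLength (m + b.length) l

/-- The number of coordinates occupied by the cycles in the list. -/
def size (l : List (Block r)) : ℕ := (l.map Block.length).sum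

@[simp] lemma size_nil : size ([] : List (Block r)) = 0 := rfl

@[simp] lemma size_cons (b : Block r) (l : List (Block r)) :
    size (b :: l) = b.length + size l := List.sum_cons

@[simp] lemma size_append (l₁ l₂ : List (Block r)) : size (l₁ ++ l₂) = size l₁ + size l₂ := by
  simp only [size, List.map_append, List.sum_append]

lemma blocks_append (m : ℕ) (l₁ l₂ : List (Block r)) :
    blocks m (l₁ ++ l₂) = (blocks m l₁ * blocks (m + size l₁) l₂ : W r n) := by
  induction l₁ generalizing m with
  | nil => simp [blocks]
  | cons b l ih => simp [blocks, ih, mul_assoc, add_assoc]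

lemma blocksLength_append (m : ℕ) (l₁ l₂ : List (Block r)) :
    blocksLength m (l₁ ++ l₂) = blocksLength m l₁ + blocksLength (m + size l₁) l₂ := by
  induction l₁ generalizing m with
  | nil => simp [blocksLength]
  | cons b l ih => simp [blocksLength, ih, add_assoc]

lemma hasWord_blocks (m : ℕ) (l : List (Block r)) :
    HasWord (m + size l) (blocksLength m l) (blocks m l : W r n) := by
  induction l generalizing m with
  | nil => exact .one 0
  | cons b l ih =>
    rw [size_cons, ← add_assoc]
    exact ((b.hasWord_elt m).mono (by omega) le_rfl).mul (ih (m + b.length))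

lemma commute_gen_blocks {l : List (Block r)} {i m : ℕ} (hi : i < m) (hm : m + size l ≤ n) :
    Commute (gen r n i) (blocks m l) := by
  induction l generalizing m with
  | nil => exact Commute.one_right _
  | cons b l ih =>
    rw [size_cons, Block.length] at hm
    exact (b.commute_gen_elt hi (by omega)).mul_right
      (ih (by omega) (by rw [Block.length]; omega))

/-! ### Reduction to products of blocks -/

/-- The factor `w` of `w * z` can be replaced, along `→`, by a product of blocks on the first `k`
coordinates whose word has at most `p` letters. -/
def ReachesBlocks (k p : ℕ) (w z : W r n) : Prop :=
  ∃ l, size l = k ∧ blocksLength 0 l ≤ p ∧ Arrow r n (w * z) (blocks 0 l * z)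

namespace ReachesBlocks

variable {k p : ℕ} {w z : W r n}

lemma one (z : W r n) : ReachesBlocks 0 0 1 z := ⟨[], rfl, le_rfl, .refl⟩

lemma of_arrow {v : W r n} (h : ReachesBlocks k p v z) (hwv : Arrow r n (w * z) (v * z)) :
    ReachesBlocks k p w z := by
  obtain ⟨l, hl, hlp, hvl⟩ := h
  exact ⟨l, hl, hlp, hwv.trans hvl⟩

lemma mono {p' : ℕ} (h : ReachesBlocks k p w z) (hp : p ≤ p') : ReachesBlocks k p' w z := by
  obtain ⟨l, hl, hlp, hwl⟩ := h
  exact ⟨l, hl, hlp.trans hp, hwl⟩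

lemma mul_elt {b : Block r} (h : ReachesBlocks k p w (b.elt k * z)) :
    ReachesBlocks (k + b.length) (p + b.wordLength k) (w * b.elt k) z := by
  obtain ⟨l, rfl, hlp, hwl⟩ := h
  refine ⟨l ++ [b], by simp, ?_, ?_⟩
  · simpa [blocksLength_append, blocksLength] using hlp
  · simpa [blocks_append, blocks, mul_assoc] using hwl

end ReachesBlocks

lemma Stable.arrow_collect_gen [NeZero r] {j d p q k : ℕ} {x y z : W r n}
    (hx : HasWord (j + 1) p x) (hy : HasWord (j + 1) q y) (hyz : Commute y z)
    (h : Stable k (x * gen r n (j + 1) * y * run (j + 2) d * z))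
    (hk : p + 1 + q + d + ell r n z ≤ k) :
    Arrow r n (x * gen r n (j + 1) * y * run (j + 2) d * z) (y * x * run (j + 1) (d + 1) * z) := by
  have hyrun : Commute (run (j + 2) d) y :=
    commute_run fun i _ _ => (hy.commute fun i' _ => gen_commute (by omega)).symm
  have hsplit : x * gen r n (j + 1) * y * run (j + 2) d * z = x * run (j + 1) (d + 1) * z * y := by
    simp only [run_succ', mul_assoc, hyz.symm.eq]
    rw [hyrun.left_comm]
  have hxz : ell r n (x * run (j + 1) (d + 1) * z) ≤ p + (d + 1) + ell r n z :=
    ell_mul_le_of_le (ell_mul_le_of_le hx.ell_le (ell_run_le _ _)) le_rfl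
  have hy_ell := hy.ell_le
  rw [hsplit] at h ⊢
  simpa only [mul_assoc] using h.arrow_rotate (by omega)

/-- The last block is built from its right end: the run `s_{j+1} ⋯ s_{j+d}` is the part of it that
has been collected so far, and `z` is the product of the blocks that are finished. -/
lemma reachesBlocks [NeZero r] {j d p k : ℕ} {x z : W r n} (hx : HasWord (j + 1) p x)
    (hjd : j + d < n) (hz : ∀ i ≤ j + d, Commute (gen r n i) z)
    (h : Stable k (x * run (j + 1) d * z)) (hk : p + d + ell r n z ≤ k) :
    ReachesBlocks (j + (d + 1)) (p + d) (x * run (j + 1) d) z := by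
  induction j generalizing d p x z with
  | zero =>
    obtain ⟨x', p', c, hx', hp, rfl⟩ | ⟨h, -⟩ := hasDecomposition (by omega) hx
    · obtain rfl := hx'.eq_one
      let b : Block r := ⟨d, c⟩
      rw [mul_assoc]
      exact (ReachesBlocks.one (b.elt 0 * z)).mul_elt.mono
        (by simp only [b, Block.wordLength]; omega)
    · omega
  | succ j ih =>
    obtain ⟨x', p', c, hx', hp, rfl⟩ | ⟨-, x', y, p', q, hx', hy, hp, rfl⟩ :=
      hasDecomposition (by omega) hx
    · let b : Block r := ⟨d, c⟩
      have hbz : ell r n (b.elt (j + 1) * z) ≤ b.wordLength (j + 1) + ell r n z :=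
        ell_mul_le_of_le (b.hasWord_elt (j + 1)).ell_le le_rfl
      have hb : b.wordLength (j + 1) = twistLength (j + 1) c + d := rfl
      rw [mul_assoc x'] at h ⊢
      refine (ReachesBlocks.mul_elt (b := b) (p := p') ?_).mono (by omega)
      have h' := ih (d := 0) (z := b.elt (j + 1) * z) hx' (by omega)
        (fun i hi => (b.commute_gen_elt (by omega) (by omega)).mul_right (hz i (by omega)))
        (by simpa [b, Block.elt, mul_assoc] using h) (by omega)
      simpa using h'
    · have hrot := h.arrow_collect_gen hx' hy (hy.commute fun i _ => hz i (by omega)) (by omega)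
      have h' := ih (hy.mul hx') (by omega) (fun i hi => hz i (by omega)) (h.of_arrow hrot)
        (by omega)
      rw [show j + 1 + (d + 1) = j + (d + 1 + 1) by omega]
      exact (h'.of_arrow hrot).mono (by omega)

/-! ### Blocks that are out of order -/

section OutOfOrder

variable [NeZero r] {a d q k : ℕ} {g : W r n}

lemma Stable.slide_transposition {L : ℕ} {x : W r n} (ha : 1 ≤ a) (hd : d + (L + 1) ≤ q)
    (hg : ∀ i, a ≤ i → i < a + q → Commute (gen r n i) g)
    (hk : 2 * L + 1 + (ell r n x + q) + ell r n g ≤ k)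
    (h : Stable k (run (a + d) L * (run (a + d) (L + 1))⁻¹ * (x * run a q) * g)) :
    Stable k (x * run a q * (run (a + d) L * (run (a + d) (L + 1))⁻¹) * g) := by
  have hcomm : Commute (run (a + d) L * (run (a + d) (L + 1))⁻¹) g :=
    (commute_run fun i _ _ => hg i (by omega) (by omega)).mul_left
      (commute_run fun i _ _ => hg i (by omega) (by omega)).inv_left
  have htransposition : ell r n (run (a + d) L * (run (a + d) (L + 1))⁻¹) ≤ L + (L + 1) :=
    ell_mul_le_of_le (ell_run_le _ _) (ell_inv_run_le (by omega) _)
  have hxrun : ell r n (x * run a q) ≤ ell r n x + q := ell_mul_le_of_le le_rfl (ell_run_le _ _)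
  exact h.of_arrow (h.arrow_slide hcomm (by omega))

/-- The factor `run (a + d) L * (run (a + d) (L + 1))⁻¹` is a transposition. Rotated through the
run `run a q`, it moves up by one coordinate each time, until it reaches the end of the run and
cancels there. -/
lemma not_stable_transposition_mul_run {L t : ℕ} {x : W r n} (ha : 1 ≤ a) (hn : a + q ≤ n)
    (hx : ∀ i, a < i → Commute (gen r n i) x)
    (hg : ∀ i, a ≤ i → i < a + q → Commute (gen r n i) g) (hq : d + (L + 1) + t = q)
    (hk : 2 * L + 1 + (ell r n x + q) + ell r n g ≤ k) :
    ¬ Stable k (run (a + d) L * (run (a + d) (L + 1))⁻¹ * (x * run a q) * g) := by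
  intro h
  replace h := h.slide_transposition ha (by omega) hg hk
  induction t generalizing d with
  | zero =>
    obtain rfl : d + (L + 1) = q := hq
    rw [run_add, ← mul_assoc x, ← mul_assoc, mul_assoc _ (run (a + d) (L + 1)),
      (semiconjBy_run (by omega) le_rfl (by omega) (by omega)).eq, ← mul_assoc,
      mul_inv_cancel_right, mul_assoc x] at h
    have hshort : ell r n (x * (run a d * run (a + d + 1) L) * g) ≤
        ell r n x + (d + L) + ell r n g :=
      ell_mul_le_of_le (ell_mul_le_of_le le_rfl
        (ell_mul_le_of_le (ell_run_le _ _) (ell_run_le _ _))) le_rfl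
    have hle := h.le_ell
    omega
  | succ t ih =>
    have hrun : SemiconjBy (run a q : W r n) (run (a + d) L * (run (a + d) (L + 1))⁻¹)
        (run (a + d + 1) L * (run (a + d + 1) (L + 1))⁻¹) :=
      (semiconjBy_run ha (by omega) (by omega) hn).mul_right
        (semiconjBy_run ha (by omega) (by omega) hn).inv_right
    have hcomm : Commute (run (a + d + 1) L * (run (a + d + 1) (L + 1))⁻¹) x :=
      (commute_run fun i _ _ => hx i (by omega)).mul_left
        (commute_run fun i _ _ => hx i (by omega)).inv_left
    rw [mul_assoc x, hrun.eq, ← mul_assoc x, ← hcomm.eq, mul_assoc _ x] at h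
    exact ih (d := d + 1) (by omega) (h.slide_transposition (d := d + 1) ha (by omega) hg hk)

lemma Stable.slide_inv_run {e : ℕ} {x : W r n} (hd : d + e + 2 ≤ q)
    (hg : ∀ i, a ≤ i → i < a + q → Commute (gen r n i) g)
    (hk : e + 1 + (ell r n x + (d + 1 + e) + q) + ell r n g ≤ k)
    (h : Stable k ((run (a + 1 + d) (e + 1))⁻¹ * (x * run (a + 1) (d + 1 + e) * run a q) * g)) :
    Stable k (x * run (a + 1) (d + 1 + e) * run a q * (run (a + 1 + d) (e + 1))⁻¹ * g) := by
  have hcomm : Commute (run (a + 1 + d) (e + 1))⁻¹ g :=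
    (commute_run fun i _ _ => hg i (by omega) (by omega)).inv_left
  have hinv : ell r n (run (a + 1 + d) (e + 1))⁻¹ ≤ e + 1 := ell_inv_run_le (by omega) _
  have hruns : ell r n (x * run (a + 1) (d + 1 + e) * run a q) ≤ ell r n x + (d + 1 + e) + q :=
    ell_mul_le_of_le (ell_mul_le_of_le le_rfl (ell_run_le _ _)) (ell_run_le _ _)
  exact h.of_arrow (h.arrow_slide hcomm (by omega))

/-- The first factor, rotated through `run a q`, moves up by one coordinate and loses a letter to
the run that starts at `a + 1`, until it reaches the end of `run a q` and cancels there. -/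
lemma not_stable_inv_run_mul_run_mul_run {e t : ℕ} {x : W r n} (ha : 1 ≤ a) (hn : a + q ≤ n)
    (hx : ∀ i, a + 1 < i → Commute (gen r n i) x)
    (hg : ∀ i, a ≤ i → i < a + q → Commute (gen r n i) g) (hq : d + e + 2 + t = q) (hte : t ≤ e)
    (hk : e + 1 + (ell r n x + (d + 1 + e) + q) + ell r n g ≤ k) :
    ¬ Stable k ((run (a + 1 + d) (e + 1))⁻¹ * (x * run (a + 1) (d + 1 + e) * run a q) * g) := by
  intro h
  replace h := h.slide_inv_run (by omega) hg hk
  induction t generalizing d e with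
  | zero =>
    obtain rfl : d + 1 + (e + 1) = q := by omega
    rw [run_add a, ← add_assoc a, Nat.add_right_comm a d 1, ← mul_assoc,
      mul_inv_cancel_right] at h
    have hshort : ell r n (x * run (a + 1) (d + 1 + e) * run a (d + 1) * g) ≤
        ell r n x + (d + 1 + e) + (d + 1) + ell r n g :=
      ell_mul_le_of_le (ell_mul_le_of_le (ell_mul_le_of_le le_rfl (ell_run_le _ _))
        (ell_run_le _ _)) le_rfl
    have hle := h.le_ell
    omega
  | succ t ih =>
    obtain ⟨e, rfl⟩ : ∃ e', e = e' + 1 := ⟨e - 1, by omega⟩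
    have hcomm : Commute (run (a + 1 + d + 2) (e + 1))⁻¹ x :=
      (commute_run fun i _ _ => hx i (by omega)).inv_left
    rw [mul_assoc x, mul_assoc x, show d + 1 + (e + 1) = d + 2 + e by omega,
      run_mul_run_mul_inv_run ha (by omega) hn, ← mul_assoc x, ← hcomm.eq, mul_assoc _ x,
      show d + 3 + e = d + 2 + 1 + e by omega, ← mul_assoc x, add_assoc (a + 1)] at h
    exact ih (d := d + 2) (e := e) (by omega) (by omega) (by omega)
      (h.slide_inv_run (by omega) hg (by omega))

end OutOfOrder

lemma Block.elt_add_eq_inv_run_mul (b : Block r) (m k : ℕ) :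
    b.elt (m + k) =
      ((run (m + 1) k)⁻¹ * (twist m b.colour * run (m + 1) (k + b.tail)) : W r n) := by
  rw [Block.elt, twist_add, run_add, Nat.add_right_comm m k 1]
  simp only [mul_assoc]

lemma Block.elt_mul_elt_eq_inv_run_mul {b₁ b₂ : Block r} (m : ℕ) {e : ℕ}
    (he : b₁.tail = e + 1) (hn : m + e + 2 < n) :
    b₁.elt m * b₂.elt (m + b₁.length) =
      ((run (m + 2) (e + 1))⁻¹ * (twist m b₁.colour * gen r n (m + 1) * twist m b₂.colour *
        run (m + 2) (e + 1) * run (m + 1) (e + 2 + b₂.tail)) : W r n) := by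
  have hcomm (c : ZMod r) : Commute (run (m + 2) (e + 1)) (twist m c : W r n) :=
    commute_run fun i _ _ => commute_gen_twist_of_lt (by omega) c
  calc b₁.elt m * b₂.elt (m + b₁.length)
      = (twist m b₁.colour * (run (m + 1) (e + 1) * (run (m + 1) (e + 2))⁻¹) * twist m b₂.colour *
          run (m + 1) (e + 2 + b₂.tail) : W r n) := by
        rw [b₂.elt_add_eq_inv_run_mul, Block.elt, Block.length, he]
        simp only [mul_assoc]
    _ = _ := by
        rw [run_mul_inv_run_succ (by omega) (by omega), ← mul_assoc, ← mul_assoc,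
          ← (hcomm _).inv_left.eq, mul_assoc _ (run (m + 2) (e + 1)), (hcomm _).eq]
        simp only [mul_assoc]

section OutOfOrder

variable [NeZero r] {m k : ℕ} {b₁ b₂ : Block r} {g : W r n}

lemma not_stable_of_colour_eq_zero (hn : m + b₁.length + b₂.length ≤ n)
    (hg : ∀ i, m < i → i < m + b₁.length + b₂.length → Commute (gen r n i) g)
    (hk : b₁.wordLength m + b₂.wordLength (m + b₁.length) + ell r n g ≤ k)
    (h₁ : b₁.colour = 0) (h₂ : b₂.colour ≠ 0) :
    ¬ Stable k (b₁.elt m * b₂.elt (m + b₁.length) * g) := by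
  have htwist : ell r n (twist m b₂.colour) ≤ 2 * m + b₂.colour.val :=
    twistLength_of_ne_zero h₂ ▸ (hasWord_twist m b₂.colour).ell_le
  rw [Block.wordLength, Block.wordLength, h₁, twistLength_zero, twistLength_of_ne_zero h₂] at hk
  rw [b₂.elt_add_eq_inv_run_mul, Block.elt, h₁, twist_zero, one_mul, ← mul_assoc (run _ _)]
  simp only [Block.length] at hn hg hk ⊢
  exact not_stable_transposition_mul_run (d := 0) (t := b₂.tail) (by omega) (by omega)
    (fun i hi => commute_gen_twist_of_lt hi _) (fun i _ _ => hg i (by omega) (by omega))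
    (by omega) (by omega)

lemma not_stable_of_length_lt (hn : m + b₁.length + b₂.length ≤ n)
    (hg : ∀ i, m < i → i < m + b₁.length + b₂.length → Commute (gen r n i) g)
    (hk : b₁.wordLength m + b₂.wordLength (m + b₁.length) + ell r n g ≤ k)
    (h₁ : b₁.colour ≠ 0) (h₂ : b₂.colour ≠ 0) (hlt : b₂.length < b₁.length) :
    ¬ Stable k (b₁.elt m * b₂.elt (m + b₁.length) * g) := by
  obtain ⟨e, he⟩ : ∃ e, b₁.tail = e + 1 :=
    ⟨b₁.tail - 1, by simp only [Block.length] at hlt; omega⟩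
  have hx : ell r n (twist m b₁.colour * gen r n (m + 1) * twist m b₂.colour) ≤
      2 * m + b₁.colour.val + 1 + (2 * m + b₂.colour.val) := by
    rw [← twistLength_of_ne_zero h₁, ← twistLength_of_ne_zero h₂]
    exact ((((hasWord_twist m b₁.colour).mono (m + 1).le_succ le_rfl).mul_gen
      (Nat.lt_succ_self _)).mul ((hasWord_twist m b₂.colour).mono (m + 1).le_succ le_rfl)).ell_le
  rw [Block.wordLength, Block.wordLength, twistLength_of_ne_zero h₁, twistLength_of_ne_zero h₂]
    at hk
  simp only [Block.length, he] at hn hg hk hlt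
  rw [Block.elt_mul_elt_eq_inv_run_mul m he (by omega)]
  have hcomm : ∀ i, m + 1 + 1 < i →
      Commute (gen r n i) (twist m b₁.colour * gen r n (m + 1) * twist m b₂.colour) :=
    fun i hi => ((commute_gen_twist_of_lt (by omega) _).mul_right
      (gen_commute (by omega))).mul_right (commute_gen_twist_of_lt (by omega) _)
  have h := not_stable_inv_run_mul_run_mul_run (g := g) (k := k) (d := 0) (e := e) (t := b₂.tail)
    (q := e + 2 + b₂.tail) (a := m + 1) (by omega) (by omega) hcomm
    (fun i _ _ => hg i (by omega) (by omega)) (by omega) (by omega) (by omega)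
  simpa only [add_zero, zero_add, add_comm 1 e] using h

end OutOfOrder

/-- The order in which blocks stand in a shortest word: coloured blocks by increasing length, then
the blocks of colour `0`. -/
def BlockLe (b₁ b₂ : Block r) : Prop :=
  b₂.colour = 0 ∨ (b₁.colour ≠ 0 ∧ b₁.length ≤ b₂.length)

instance : IsTrans (Block r) BlockLe where
  trans _ _ _ h₁ h₂ := by
    rcases h₂ with h₂ | ⟨hc, hle⟩
    · exact .inl h₂
    · obtain ⟨hc', hle'⟩ := h₁.resolve_left hc
      exact .inr ⟨hc', hle'.trans hle⟩

lemma not_stable_of_not_blockLe [NeZero r] {l₁ l₂ : List (Block r)} {b₁ b₂ : Block r} {k : ℕ}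
    (hn : size (l₁ ++ b₁ :: b₂ :: l₂) ≤ n) (hk : blocksLength 0 (l₁ ++ b₁ :: b₂ :: l₂) ≤ k)
    (hle : ¬ BlockLe b₁ b₂) : ¬ Stable k (blocks 0 (l₁ ++ b₁ :: b₂ :: l₂) : W r n) := by
  have hcolour : b₂.colour ≠ 0 ∧ (b₁.colour ≠ 0 → b₂.length < b₁.length) := by
    simpa only [BlockLe, not_or, not_and, not_le] using hle
  obtain ⟨h₂, hlt⟩ := hcolour
  simp only [size_append, size_cons] at hn
  simp only [blocksLength_append, blocksLength, blocks_append, blocks, zero_add] at hk ⊢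
  have hpos₁ : 0 < b₁.length := b₁.tail.succ_pos
  have hpos₂ : 0 < b₂.length := b₂.tail.succ_pos
  set m := size l₁
  have hleft : HasWord m (blocksLength 0 l₁) (blocks 0 l₁ : W r n) := by
    simpa only [zero_add] using hasWord_blocks 0 l₁
  have hright := hasWord_blocks (n := n) (m + b₁.length + b₂.length) l₂
  have hcomm : Commute (blocks 0 l₁ : W r n) (b₁.elt m * b₂.elt (m + b₁.length)) :=
    hleft.commute fun _ hi => (b₁.commute_gen_elt hi (by omega)).mul_right
      (b₂.commute_gen_elt (by omega) (by omega))
  have hg : ∀ i, m < i → i < m + b₁.length + b₂.length →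
      Commute (gen r n i) (blocks 0 l₁ * blocks (m + b₁.length + b₂.length) l₂) :=
    fun i hi hi' => (hleft.commute fun _ _ => gen_commute (by omega)).symm.mul_right
      (commute_gen_blocks hi' (by omega))
  have hg_ell := ell_mul_le_of_le hleft.ell_le hright.ell_le
  rw [← mul_assoc (b₁.elt m), ← mul_assoc, hcomm.eq, mul_assoc (b₁.elt m * _)]
  by_cases h₁ : b₁.colour = 0
  · exact not_stable_of_colour_eq_zero (by omega) hg (by omega) h₁ h₂
  · exact not_stable_of_length_lt (by omega) hg (by omega) h₁ h₂ (hlt h₁)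

lemma exists_adjacent_not_blockLe {l : List (Block r)} (h : ¬ l.Pairwise BlockLe) :
    ∃ l₁ b₁ b₂ l₂, l = l₁ ++ b₁ :: b₂ :: l₂ ∧ ¬ BlockLe b₁ b₂ := by
  rw [← List.isChain_iff_pairwise, List.isChain_iff_forall_rel_of_append_cons_cons] at h
  push Not at h
  obtain ⟨b₁, b₂, l₁, l₂, hl, hb⟩ := h
  exact ⟨l₁, b₁, b₂, l₂, hl, hb⟩

lemma exists_arrow_stable (w : W r n) : ∃ v, Arrow r n w v ∧ Stable (ell r n v) v := by
  obtain ⟨v, hwv, hv⟩ := WellFounded.has_min (measure (ell r n)).wf {v | Arrow r n w v} ⟨w, .refl⟩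
  exact ⟨v, hwv, fun u hvu => not_lt.mp (hv u (hwv.trans hvu))⟩

lemma Stable.exists_blocks [NeZero r] {w : W r n} (h : Stable (ell r n w) w) :
    ∃ l : List (Block r), size l = n ∧ blocksLength 0 l ≤ ell r n w ∧
      Arrow r n w (blocks 0 l) := by
  have hword := hasWord_ell w
  obtain _ | n := n
  · exact ⟨[], rfl, Nat.zero_le _, hword.eq_one ▸ .refl⟩
  have hone : ell r (n + 1) (1 : W r (n + 1)) = 0 := Nat.le_zero.mp (HasWord.one (j := 0) 0).ell_le
  obtain ⟨l, hl, hlength, hwl⟩ := reachesBlocks (d := 0) (z := 1) hword n.lt_succ_self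
    (fun i _ => Commute.one_right _) (by simpa using h) (by omega)
  exact ⟨l, hl, hlength, by simpa using hwl⟩

lemma exists_sorted_blocks [NeZero r] (w : W r n) :
    ∃ l : List (Block r), size l = n ∧ l.Pairwise BlockLe ∧ Arrow r n w (blocks 0 l) ∧
      ell r n (blocks 0 l) = blocksLength 0 l := by
  obtain ⟨v, hwv, hv⟩ := exists_arrow_stable w
  obtain ⟨l, hsize, hlength, hvl⟩ := hv.exists_blocks
  refine ⟨l, hsize, ?_, hwv.trans hvl,
    (hasWord_blocks 0 l).ell_le.antisymm (hlength.trans (hv _ hvl))⟩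
  by_contra hsorted
  obtain ⟨l₁, b₁, b₂, l₂, rfl, hb⟩ := exists_adjacent_not_blockLe hsorted
  exact not_stable_of_not_blockLe hsize.le hlength hb (hv.of_arrow hvl)

/-! ### The action on coloured coordinates -/

/-- The permutation by which `t` acts on pairs of a coordinate and a colour: it adds `1` to the
colour of the coordinate `0`. -/
def tPerm (r : ℕ) : Equiv.Perm (ℕ × ZMod r) :=
  Equiv.prodShear (Equiv.refl ℕ) fun i => Equiv.addRight (if i = 0 then 1 else 0)

/-- The permutation by which `s_i` acts: it swaps the coordinates `i - 1` and `i`, as coordinates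
are counted from `0`. -/
def sPerm (r i : ℕ) : Equiv.Perm (ℕ × ZMod r) :=
  Equiv.prodCongr (Equiv.swap (i - 1) i) (Equiv.refl _)

/-- The permutation by which the generator of index `i` acts, trivial for `i ≥ n` as the generator
itself is. -/
def genPerm (r n i : ℕ) : Equiv.Perm (ℕ × ZMod r) :=
  if n ≤ i then 1 else if i = 0 then tPerm r else sPerm r i

/-- The permutation that adds `e` to every colour. -/
def colourShift (e : ZMod r) : Equiv.Perm (ℕ × ZMod r) :=
  Equiv.prodCongr (Equiv.refl ℕ) (Equiv.addRight e)

lemma tPerm_apply (x : ℕ × ZMod r) : tPerm r x = (x.1, x.2 + if x.1 = 0 then 1 else 0) := rfl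

lemma sPerm_apply (i : ℕ) (x : ℕ × ZMod r) :
    sPerm r i x = (if x.1 = i - 1 then i else if x.1 = i then i - 1 else x.1, x.2) :=
  Prod.ext (Equiv.swap_apply_def _ _ _) rfl

lemma colourShift_apply (e : ZMod r) (x : ℕ × ZMod r) : colourShift e x = (x.1, x.2 + e) := rfl

lemma genPerm_of_le {i : ℕ} (h : n ≤ i) : genPerm r n i = 1 := if_pos h

lemma genPerm_zero (h : 0 < n) : genPerm r n 0 = tPerm r := by
  rw [genPerm, if_neg (by omega), if_pos rfl]

lemma genPerm_of_pos {i : ℕ} (h : i < n) (h' : 1 ≤ i) : genPerm r n i = sPerm r i := by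
  rw [genPerm, if_neg (by omega), if_neg (by omega)]

lemma tPerm_pow_apply (k : ℕ) (x : ℕ × ZMod r) :
    (tPerm r ^ k) x = (x.1, x.2 + if x.1 = 0 then (k : ZMod r) else 0) := by
  induction k with
  | zero => simp
  | succ k ih =>
    rw [pow_succ', Equiv.Perm.mul_apply, ih, tPerm_apply]
    split_ifs <;> simp [add_assoc]

lemma tPerm_pow : tPerm r ^ r = 1 := by
  ext x <;> simp [tPerm_pow_apply]

lemma sPerm_sq (i : ℕ) : sPerm r i ^ 2 = 1 := by
  ext x <;> simp [pow_two, sPerm]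

lemma tPerm_sPerm_one : tPerm r * sPerm r 1 * tPerm r * sPerm r 1 =
    sPerm r 1 * tPerm r * sPerm r 1 * tPerm r := by
  apply Equiv.ext
  rintro ⟨_ | _ | k, a⟩ <;> simp [sPerm_apply, tPerm_apply]

lemma commute_tPerm_sPerm {i : ℕ} (h : 2 ≤ i) : Commute (tPerm r) (sPerm r i) := by
  apply Equiv.ext
  intro x
  have hzero : (if x.1 = i - 1 then i else if x.1 = i then i - 1 else x.1) = 0 ↔ x.1 = 0 := by
    split_ifs <;> omega
  simp only [Equiv.Perm.mul_apply, sPerm_apply, tPerm_apply, hzero]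

lemma sPerm_braid {i : ℕ} (h : 1 ≤ i) : sPerm r i * sPerm r (i + 1) * sPerm r i =
    sPerm r (i + 1) * sPerm r i * sPerm r (i + 1) := by
  have hswap : Equiv.swap (i - 1) i * Equiv.swap i (i + 1) * Equiv.swap (i - 1) i =
      Equiv.swap i (i + 1) * Equiv.swap (i - 1) i * Equiv.swap i (i + 1) := by
    rw [Equiv.swap_mul_swap_mul_swap (by omega) (by omega), Equiv.swap_comm (i - 1) i,
      Equiv.swap_comm i (i + 1), Equiv.swap_mul_swap_mul_swap (by omega) (by omega),
      Equiv.swap_comm]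
  exact Equiv.ext fun x => Prod.ext (DFunLike.congr_fun hswap x.1) rfl

lemma commute_sPerm {i j : ℕ} (h : 1 ≤ i) (hij : i + 1 < j) :
    Commute (sPerm r i) (sPerm r j) := by
  apply Equiv.ext
  intro x
  simp only [Equiv.Perm.mul_apply, sPerm_apply]
  congr 1
  split_ifs <;> omega

lemma commute_genPerm_colourShift (i : ℕ) (e : ZMod r) :
    Commute (genPerm r n i) (colourShift e) := by
  apply Equiv.ext
  intro x
  unfold genPerm
  split_ifs
  · rfl
  · simp only [Equiv.Perm.mul_apply, tPerm_apply, colourShift_apply, add_right_comm]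
  · rfl

lemma genPerm_apply_fst_lt_iff (i : ℕ) (x : ℕ × ZMod r) : (genPerm r n i x).1 < n ↔ x.1 < n := by
  unfold genPerm
  split_ifs
  · rfl
  · rfl
  · rw [sPerm_apply]
    split_ifs <;> omega

/-- The action of `W_n` on pairs of a coordinate and a colour by coloured permutations. The
coordinates `≥ n` are fixed. -/
def rep (r n : ℕ) : W r n →* Equiv.Perm (ℕ × ZMod r) :=
  PresentedGroup.toGroup (f := genPerm r n) (by
    rintro w (rfl | ⟨i, hi, hin, rfl⟩ | ⟨hn, rfl⟩ | ⟨i, hi, hin, rfl⟩ | ⟨i, hi, hin, rfl⟩ |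
      ⟨i, j, hi, hij, hjn, rfl⟩ | ⟨i, hni, rfl⟩)
    · rw [map_pow, FreeGroup.lift_apply_of]
      rcases Nat.eq_zero_or_pos n with rfl | hn
      · rw [genPerm_of_le le_rfl, one_pow]
      · rw [genPerm_zero hn, tPerm_pow]
    · rw [map_pow, FreeGroup.lift_apply_of, genPerm_of_pos hin hi, sPerm_sq]
    · simp only [map_mul, map_inv, FreeGroup.lift_apply_of, mul_inv_eq_one]
      rw [genPerm_zero (by omega), genPerm_of_pos hn le_rfl, tPerm_sPerm_one]
    · simp only [map_mul, map_inv, FreeGroup.lift_apply_of, mul_inv_eq_one]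
      rw [genPerm_zero (by omega), genPerm_of_pos hin (by omega), (commute_tPerm_sPerm hi).eq]
    · simp only [map_mul, map_inv, FreeGroup.lift_apply_of, mul_inv_eq_one]
      rw [genPerm_of_pos (i := i) (by omega) hi, genPerm_of_pos hin (by omega), sPerm_braid hi]
    · simp only [map_mul, map_inv, FreeGroup.lift_apply_of, mul_inv_eq_one]
      rw [genPerm_of_pos (i := i) (by omega) hi, genPerm_of_pos hjn (by omega),
        (commute_sPerm hi hij).eq]
    · rw [FreeGroup.lift_apply_of, genPerm_of_le hni])

lemma rep_gen (i : ℕ) : rep r n (gen r n i) = genPerm r n i := PresentedGroup.toGroup.of _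

lemma commute_rep_colourShift (w : W r n) (e : ZMod r) : Commute (rep r n w) (colourShift e) := by
  have hw := PresentedGroup.generated_by (rels r n)
    ((Subgroup.centralizer {colourShift e}).comap (rep r n)) (fun i => ?_) w
  · exact Subgroup.mem_centralizer_singleton_iff.mp hw
  · refine Subgroup.mem_centralizer_singleton_iff.mpr ?_
    rw [← gen, rep_gen]
    exact commute_genPerm_colourShift i e

open scoped Pointwise in
lemma rep_apply_fst_lt_iff (w : W r n) (x : ℕ × ZMod r) : (rep r n w x).1 < n ↔ x.1 < n := by
  have hw := PresentedGroup.generated_by (rels r n)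
    ((MulAction.stabilizer (Equiv.Perm (ℕ × ZMod r)) {x : ℕ × ZMod r | x.1 < n}).comap (rep r n))
    (fun i => ?_) w
  · exact MulAction.mem_stabilizer_set.mp hw x
  · refine MulAction.mem_stabilizer_set.mpr fun y => ?_
    rw [← gen, rep_gen]
    exact genPerm_apply_fst_lt_iff i y

lemma rep_run_apply {m k : ℕ} (h : m + k < n) (x : ℕ × ZMod r) :
    rep r n (run (m + 1) k) x =
      (if x.1 < m ∨ m + k < x.1 then x.1 else if x.1 = m + k then m else x.1 + 1, x.2) := by
  induction k generalizing x with
  | zero =>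
    rw [run_zero, map_one, Equiv.Perm.one_apply]
    ext
    · simp only
      split_ifs <;> omega
    · rfl
  | succ k ih =>
    rw [run_succ, map_mul, Equiv.Perm.mul_apply, rep_gen, genPerm_of_pos (by omega) (by omega),
      ih (by omega), sPerm_apply]
    congr 1
    simp only
    split_ifs <;> omega

lemma rep_twist_apply [NeZero r] {m : ℕ} (h : m < n) (c : ZMod r) (x : ℕ × ZMod r) :
    rep r n (twist m c) x = (x.1, x.2 + if x.1 = m then c else 0) := by
  induction m generalizing x with
  | zero =>
    rw [twist, map_pow, rep_gen, genPerm_zero h, tPerm_pow_apply, ZMod.natCast_zmod_val]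
  | succ m ih =>
    rw [twist, map_mul, map_mul, Equiv.Perm.mul_apply, Equiv.Perm.mul_apply, rep_gen,
      genPerm_of_pos h (by omega), ih (by omega)]
    simp only [sPerm_apply]
    ext
    · simp only
      split_ifs <;> omega
    · simp only
      congr 1
      split_ifs <;> first | rfl | omega

section Block

variable [NeZero r] {m : ℕ} {b : Block r} {x : ℕ × ZMod r}

lemma rep_elt_apply_of_notMem (h : m + b.length ≤ n) (hx : x.1 ∉ Set.Ico m (m + b.length)) :
    rep r n (b.elt m) x = x := by
  simp only [Block.length, Set.mem_Ico] at h hx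
  rw [Block.elt, map_mul, Equiv.Perm.mul_apply, rep_run_apply (by omega),
    rep_twist_apply (by omega), if_pos (by omega), if_neg (by simp only; omega), add_zero]

lemma rep_elt_apply_add (h : m + b.length ≤ n) {i : ℕ} (hi : i < b.tail) (a : ZMod r) :
    rep r n (b.elt m) (m + i, a) = (m + (i + 1), a) := by
  rw [Block.length] at h
  rw [Block.elt, map_mul, Equiv.Perm.mul_apply, rep_run_apply (by omega),
    rep_twist_apply (by omega), if_neg (by simp only; omega), if_neg (by simp only; omega),
    if_neg (by simp only; omega), add_zero, add_assoc]

lemma rep_elt_apply_add_tail (h : m + b.length ≤ n) (a : ZMod r) :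
    rep r n (b.elt m) (m + b.tail, a) = (m, a + b.colour) := by
  rw [Block.length] at h
  rw [Block.elt, map_mul, Equiv.Perm.mul_apply, rep_run_apply (by omega),
    rep_twist_apply (by omega), if_neg (by simp only; omega), if_pos rfl, if_pos rfl]

lemma rep_elt_pow_apply (h : m + b.length ≤ n) {i : ℕ} (hi : i < b.length) (a : ZMod r) :
    (rep r n (b.elt m) ^ i) (m, a) = (m + i, a) := by
  induction i with
  | zero => rfl
  | succ i ih =>
    rw [Block.length] at hi
    rw [pow_succ', Equiv.Perm.mul_apply, ih (by rw [Block.length]; omega),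
      rep_elt_apply_add h (by omega)]

lemma rep_blocks_apply_of_notMem {l : List (Block r)} (h : m + size l ≤ n)
    (hx : x.1 ∉ Set.Ico m (m + size l)) : rep r n (blocks m l) x = x := by
  induction l generalizing m with
  | nil => rw [blocks, map_one, Equiv.Perm.one_apply]
  | cons b l ih =>
    simp only [size_cons, Set.mem_Ico] at h hx
    rw [blocks, map_mul, Equiv.Perm.mul_apply, ih (by omega) (by rw [Set.mem_Ico]; omega),
      rep_elt_apply_of_notMem (by omega) (by rw [Set.mem_Ico]; omega)]

lemma disjoint_rep_elt_blocks {l : List (Block r)} (h : m + b.length + size l ≤ n) :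
    (rep r n (b.elt m)).Disjoint (rep r n (blocks (m + b.length) l)) := by
  intro x
  by_cases hx : x.1 < m + b.length
  · exact .inr (rep_blocks_apply_of_notMem h fun hx' => hx'.1.not_gt hx)
  · exact .inl (rep_elt_apply_of_notMem (by omega) fun hx' => hx hx'.2)

end Block

/-! ### Cycle types -/

/-- The orbit of `x` under `g` is, up to colour, a cycle of length `b.length`, and going once around
that cycle adds `b.colour` to the colour. -/
def OnCycle (g : Equiv.Perm (ℕ × ZMod r)) (b : Block r) (x : ℕ × ZMod r) : Prop :=
  (g ^ b.length) x = colourShift b.colour x ∧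
    ∀ j, 0 < j → j < b.length → ∀ e, (g ^ j) x ≠ colourShift e x

section OnCycle

variable {g h : Equiv.Perm (ℕ × ZMod r)} {b b' : Block r} {x : ℕ × ZMod r} {m k p : ℕ}

lemma OnCycle.unique (hb : OnCycle g b x) (hb' : OnCycle g b' x) : b = b' := by
  obtain ⟨i, c⟩ := b
  obtain ⟨i', c'⟩ := b'
  have hi : i = i' := by
    rcases lt_trichotomy i i' with hlt | rfl | hlt
    · exact absurd hb.1 (hb'.2 _ i.succ_pos (Nat.succ_lt_succ hlt) c)
    · rfl
    · exact absurd hb'.1 (hb.2 _ i'.succ_pos (Nat.succ_lt_succ hlt) c')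
  subst hi
  have hc : x.2 + c = x.2 + c' := congrArg Prod.snd (hb.1.symm.trans hb'.1)
  rw [add_left_cancel hc]

lemma onCycle_conj_iff (hh : ∀ e, Commute h (colourShift e)) :
    OnCycle (h * g * h⁻¹) b (h x) ↔ OnCycle g b x := by
  have hpow (j : ℕ) (e : ZMod r) :
      ((h * g * h⁻¹) ^ j) (h x) = colourShift e (h x) ↔ (g ^ j) x = colourShift e x := by
    rw [conj_pow, ← Equiv.Perm.mul_apply, inv_mul_cancel_right, Equiv.Perm.mul_apply,
      ← Equiv.Perm.mul_apply (colourShift e), ← (hh e).eq, Equiv.Perm.mul_apply,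
      h.injective.eq_iff]
  simp only [OnCycle, ne_eq, hpow]

lemma onCycle_pow_apply_iff (hg : ∀ e, Commute g (colourShift e)) (i : ℕ) :
    OnCycle g b ((g ^ i) x) ↔ OnCycle g b x := by
  simpa only [(Commute.self_pow g i).symm.eq, mul_inv_cancel_right] using
    onCycle_conj_iff (g := g) (b := b) (x := x) fun e => (hg e).pow_left i

lemma onCycle_mul_iff (hd : g.Disjoint h) (hx : h x = x) :
    OnCycle (g * h) b x ↔ OnCycle g b x := by
  have hpow (j : ℕ) : ((g * h) ^ j) x = (g ^ j) x := by
    rw [hd.commute.mul_pow, Equiv.Perm.mul_apply, Equiv.Perm.pow_apply_eq_self_of_apply_eq_self hx]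
  simp only [OnCycle, hpow]

/-- The number of pairs with coordinate in `[m, k)` that lie on cycles of `g` of type `b`. -/
def cycleCount (g : Equiv.Perm (ℕ × ZMod r)) (b : Block r) (m k : ℕ) : ℕ∞ :=
  {x | x.1 ∈ Set.Ico m k ∧ OnCycle g b x}.encard

lemma cycleCount_congr (hgh : ∀ x : ℕ × ZMod r, x.1 ∈ Set.Ico m k →
    (OnCycle g b x ↔ OnCycle h b x)) : cycleCount g b m k = cycleCount h b m k :=
  congrArg Set.encard (Set.ext fun x => and_congr_right (hgh x))

lemma cycleCount_add (hmk : m ≤ k) (hkp : k ≤ p) :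
    cycleCount g b m k + cycleCount g b k p = cycleCount g b m p := by
  rw [cycleCount, cycleCount, ← Set.encard_union_eq]
  · congr 1
    ext x
    rw [← Set.Ico_union_Ico_eq_Ico hmk hkp]
    exact or_and_right.symm
  · exact Set.disjoint_left.mpr fun x hx hx' => hx'.1.1.not_gt hx.1.2

end OnCycle

lemma cycleCount_of_isConj {w v : W r n} (h : IsConj w v) (b : Block r) :
    cycleCount (rep r n w) b 0 n = cycleCount (rep r n v) b 0 n := by
  obtain ⟨u, rfl⟩ := isConj_iff.mp h
  rw [cycleCount, cycleCount, eq_comm, ← Set.encard_preimage_of_bijective (rep r n u).bijective]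
  congr 1
  ext x
  rw [Set.mem_preimage, Set.mem_ofPred_eq, Set.mem_ofPred_eq, map_mul, map_mul, map_inv,
    onCycle_conj_iff (commute_rep_colourShift u)]
  simp only [Set.mem_Ico, Nat.zero_le, true_and, rep_apply_fst_lt_iff]

section CycleType

variable [NeZero r] {m : ℕ} {b b' : Block r} {x : ℕ × ZMod r}

lemma onCycle_rep_elt (h : m + b.length ≤ n) (hx : x.1 ∈ Set.Ico m (m + b.length)) :
    OnCycle (rep r n (b.elt m)) b x := by
  obtain ⟨i, a⟩ := x
  obtain ⟨i, rfl⟩ := Nat.exists_eq_add_of_le hx.1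
  rw [← rep_elt_pow_apply h (Nat.add_lt_add_iff_left.mp hx.2) a,
    onCycle_pow_apply_iff (commute_rep_colourShift _)]
  refine ⟨?_, fun j hj hjb e he => ?_⟩
  · rw [Block.length, pow_succ', Equiv.Perm.mul_apply, rep_elt_pow_apply h b.tail.lt_succ_self,
      rep_elt_apply_add_tail h, colourShift_apply]
  · rw [rep_elt_pow_apply h hjb] at he
    have hfst : m + j = m := congrArg Prod.fst he
    omega

lemma encard_fst_mem_Ico (m k : ℕ) :
    {x : ℕ × ZMod r | x.1 ∈ Set.Ico m (m + k)}.encard = k * r := by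
  have hprod : {x : ℕ × ZMod r | x.1 ∈ Set.Ico m (m + k)} = Set.Ico m (m + k) ×ˢ Set.univ :=
    Set.ext fun x => (and_iff_left (Set.mem_univ x.2)).symm
  rw [hprod, Set.encard_prod, Set.encard_univ, ENat.card_eq_coe_fintype_card, ZMod.card,
    ← Finset.coe_Ico, Set.encard_coe_eq_coe_finsetCard, Nat.card_Ico, Nat.add_sub_cancel_left]

lemma cycleCount_rep_elt (h : m + b'.length ≤ n) :
    cycleCount (rep r n (b'.elt m)) b m (m + b'.length) = b.length * r * [b'].count b := by
  by_cases hb : b' = b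
  · subst hb
    rw [List.count_singleton_self, Nat.cast_one, mul_one, ← encard_fst_mem_Ico m]
    exact congrArg Set.encard (Set.ext fun x => and_iff_left_of_imp (onCycle_rep_elt h))
  · rw [List.count_singleton, if_neg (by simpa using hb), Nat.cast_zero, mul_zero,
      cycleCount, Set.encard_eq_zero]
    exact Set.eq_empty_of_forall_notMem fun x hx => hb ((onCycle_rep_elt h hx.1).unique hx.2)

lemma cycleCount_rep_blocks {l : List (Block r)} (h : m + size l ≤ n) :
    cycleCount (rep r n (blocks m l)) b m (m + size l) = b.length * r * l.count b := by
  induction l generalizing m with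
  | nil => simp [cycleCount]
  | cons b' l ih =>
    rw [size_cons, ← add_assoc] at h
    have hd := disjoint_rep_elt_blocks (b := b') h
    have hleft : cycleCount (rep r n (blocks m (b' :: l))) b m (m + b'.length) =
        cycleCount (rep r n (b'.elt m)) b m (m + b'.length) := by
      refine cycleCount_congr fun x hx => ?_
      rw [blocks, map_mul, onCycle_mul_iff hd]
      exact rep_blocks_apply_of_notMem h fun hx' => hx'.1.not_gt hx.2
    have hright : cycleCount (rep r n (blocks m (b' :: l))) b (m + b'.length)
          (m + b'.length + size l) =
        cycleCount (rep r n (blocks (m + b'.length) l)) b (m + b'.length)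
          (m + b'.length + size l) := by
      refine cycleCount_congr fun x hx => ?_
      rw [blocks, map_mul, hd.commute.eq, onCycle_mul_iff hd.symm]
      exact rep_elt_apply_of_notMem (by omega) fun hx' => hx.1.not_gt hx'.2
    rw [size_cons, ← add_assoc, ← cycleCount_add (m.le_add_right _) (Nat.le_add_right _ (size l)),
      hleft, hright, cycleCount_rep_elt (by omega), ih h, ← mul_add, ← Nat.cast_add,
      ← List.count_append, List.singleton_append]

lemma perm_of_isConj_blocks {l l' : List (Block r)} (hl : size l = n) (hl' : size l' = n)
    (h : IsConj (blocks 0 l : W r n) (blocks 0 l')) : l.Perm l' := by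
  have hcount {l : List (Block r)} (hl : size l = n) (b : Block r) :
      cycleCount (rep r n (blocks 0 l)) b 0 n = b.length * r * l.count b := by
    have hb := cycleCount_rep_blocks (n := n) (m := 0) (b := b) (l := l) (by omega)
    rwa [zero_add, hl] at hb
  refine List.perm_iff_count.mpr fun b => ?_
  have heq := cycleCount_of_isConj h b
  rw [hcount hl, hcount hl'] at heq
  exact Nat.eq_of_mul_eq_mul_left (Nat.mul_pos b.tail.succ_pos (NeZero.pos r))
    (by exact_mod_cast heq)

end CycleType

/-! ### Lengths of sorted products of blocks -/

/-- Twice the length of the shorter of two coloured blocks. In a sorted product this is the number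
of letters by which the first of them lengthens the word for the second. -/
def interaction : Sym2 (Block r) → ℕ :=
  Sym2.lift ⟨fun b b' => if b.colour = 0 ∨ b'.colour = 0 then 0 else 2 * min b.length b'.length,
    fun b b' => by simp only [or_comm, min_comm]⟩

lemma interaction_mk (b b' : Block r) : interaction s(b, b') =
    if b.colour = 0 ∨ b'.colour = 0 then 0 else 2 * min b.length b'.length := rfl

lemma BlockLe.interaction_eq {b b' : Block r} (h : BlockLe b b') :
    interaction s(b, b') = if b'.colour = 0 then 0 else 2 * b.length := by
  rw [interaction_mk]
  rcases h with h | ⟨hc, hle⟩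
  · rw [if_pos (Or.inr h), if_pos h]
  · simp only [hc, false_or, min_eq_left hle]

lemma Block.wordLength_add (b : Block r) (m k : ℕ) :
    b.wordLength (m + k) = b.wordLength m + if b.colour = 0 then 0 else 2 * k := by
  unfold wordLength twistLength
  split_ifs <;> omega

-- The self-interactions `s(b, b)` that `List.sym2` includes are added on the left as well.
lemma blocksLength_add_sum_interaction {l : List (Block r)} (h : l.Pairwise BlockLe) (m : ℕ) :
    blocksLength m l + (l.map fun b => interaction s(b, b)).sum =
      (l.map fun b => b.wordLength m).sum + (l.sym2.map interaction).sum := by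
  induction h generalizing m with
  | nil => rfl
  | @cons b l hb _ ih =>
    have hshift : (l.map fun b' => b'.wordLength (m + b.length)).sum =
        (l.map fun b' => b'.wordLength m).sum + (l.map fun b' => interaction s(b, b')).sum := by
      rw [← List.sum_map_add]
      refine congrArg List.sum (List.map_congr_left fun b' hb' => ?_)
      rw [Block.wordLength_add, (hb b' hb').interaction_eq]
    have hl := ih (m + b.length)
    simp only [blocksLength, List.sym2, List.map_cons, List.map_append, List.map_map,
      List.sum_cons, List.sum_append, Function.comp_def]
    omega

lemma blocksLength_eq_of_perm {l l' : List (Block r)} (hl : l.Pairwise BlockLe)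
    (hl' : l'.Pairwise BlockLe) (h : l.Perm l') (m : ℕ) :
    blocksLength m l = blocksLength m l' := by
  have hlength := blocksLength_add_sum_interaction hl m
  rw [(h.map _).sum_eq, (h.map _).sum_eq, (h.sym2.map _).sum_eq,
    ← blocksLength_add_sum_interaction hl' m] at hlength
  exact Nat.add_right_cancel hlength

end CRG

open CRG in
/-- For any conjugacy class `C` of `W_n` and any `w ∈ C`, there exists an
element `w' ∈ C_min` (the set of minimal length elements of `C`) such that `w → w'`. -/
theorem minimal_length_conjugate (r n : ℕ) (hr : 1 ≤ r) (hn : 1 ≤ n) (w : W r n) :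
    ∃ w' : W r n, IsConj w w' ∧ (∀ u : W r n, IsConj w u → ell r n w' ≤ ell r n u) ∧
      Arrow r n w w' := by
  have : NeZero r := ⟨by omega⟩
  obtain ⟨l, hl, hl_sorted, hwl, hl_length⟩ := exists_sorted_blocks w
  refine ⟨blocks 0 l, hwl.isConj, fun u hwu => ?_, hwl⟩
  obtain ⟨l', hl', hl'_sorted, hul', hl'_length⟩ := exists_sorted_blocks u
  have hperm : l.Perm l' :=
    perm_of_isConj_blocks hl hl' (hwl.isConj.symm.trans (hwu.trans hul'.isConj))
  calc ell r n (blocks 0 l) = blocksLength 0 l := hl_length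
    _ = blocksLength 0 l' := blocksLength_eq_of_perm hl_sorted hl'_sorted hperm 0
    _ = ell r n (blocks 0 l') := hl'_length.symm
    _ ≤ ell r n u := hul'.ell_le
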